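/- arXiv:1212.1377 — 2 statements merged into one kernel-verified Lean document; each statement's English description precedes it below -/
import Mathlib

section
/- Let d ≥ 1, let P : ℝ^d → ℝ be twice continuously differentiable, and suppose there exist constants L₁, L₂ such that ‖DP(x)‖ ≤ L₁ and ‖D²P(x)‖ ≤ L₂ for all x ∈ ℝ^d. Then for any three ℝ^d-valued random variables X^f, X^a, X^c on a common probability space and any real p ≥ 2, E[ |(1/2)(P(X^f) + P(X^a)) − P(X^c)|^p ] ≤ 2^{p−1}·L₁^p·E[ ‖(1/2)(X^f + X^a) − X^c‖^p ] + 2^{−(p+1)}·L₂^p·E[ ‖X^f − X^a‖^{2p} ]. -/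
open MeasureTheory ProbabilityTheory

theorem aux_taylor {E : Type*} [NormedAddCommGroup E] [NormedSpace ℝ E]
    (P : E → ℝ) (L₂ : ℝ) (hP : ContDiff ℝ 2 P)
    (hD2P : ∀ x, ‖iteratedFDeriv ℝ 2 P x‖ ≤ L₂) (m h : E) :
    ‖P (m + h) - P m - fderiv ℝ P m h‖ ≤ L₂ * ‖h‖ * ‖h‖ := by
  have hL : 0 ≤ L₂ := (norm_nonneg _).trans (hD2P m)
  have hd : Differentiable ℝ P := hP.differentiable (by norm_num)
  have hd1 : Differentiable ℝ (fderiv ℝ P) :=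
    (hP.fderiv_right (m := 1) (by norm_num)).differentiable (by norm_num)
  have hb : ∀ x, ‖fderiv ℝ (fderiv ℝ P) x‖ ≤ L₂ := by
    intro x
    have h1 := hD2P x
    rw [← norm_iteratedFDeriv_fderiv, ← norm_iteratedFDeriv_fderiv,
      norm_iteratedFDeriv_zero] at h1
    exact h1
  have hlip : ∀ x, ‖fderiv ℝ P x - fderiv ℝ P m‖ ≤ L₂ * ‖x - m‖ := fun x =>
    convex_univ.norm_image_sub_le_of_norm_fderiv_le (fun x _ => hd1 x) (fun x _ => hb x)
      (Set.mem_univ m) (Set.mem_univ x)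
  have key := (convex_closedBall m ‖h‖).norm_image_sub_le_of_norm_fderiv_le'
    (f := P) (φ := fderiv ℝ P m) (C := L₂ * ‖h‖) (x := m) (y := m + h)
    (fun x _ => hd x)
    (fun x hx => (hlip x).trans (by
      rw [mem_closedBall_iff_norm] at hx
      gcongr))
    (Metric.mem_closedBall_self (norm_nonneg _)) (by simp)
  simpa using key

theorem aux_pointwise {E : Type*} [NormedAddCommGroup E] [NormedSpace ℝ E]
    (P : E → ℝ) (L₁ L₂ : ℝ) (hP : ContDiff ℝ 2 P)
    (hDP : ∀ x, ‖fderiv ℝ P x‖ ≤ L₁)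
    (hD2P : ∀ x, ‖iteratedFDeriv ℝ 2 P x‖ ≤ L₂) (x y z : E) :
    |(1 / 2) * (P x + P y) - P z| ≤
      L₁ * ‖(2⁻¹ : ℝ) • (x + y) - z‖ + L₂ * ‖x - y‖ ^ 2 / 4 := by
  have hd : Differentiable ℝ P := hP.differentiable (by norm_num)
  set m := (2⁻¹ : ℝ) • (x + y) with hm
  set h := (2⁻¹ : ℝ) • (x - y) with hh
  have ex : m + h = x := by rw [hm, hh]; module
  have ey : m + -h = y := by rw [hm, hh]; module
  have t1 := aux_taylor P L₂ hP hD2P m h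
  have t2 := aux_taylor P L₂ hP hD2P m (-h)
  have t3 : ‖P m - P z‖ ≤ L₁ * ‖m - z‖ :=
    convex_univ.norm_image_sub_le_of_norm_fderiv_le (fun x _ => hd x) (fun x _ => hDP x)
      (Set.mem_univ z) (Set.mem_univ m)
  have hn : ‖h‖ = ‖x - y‖ / 2 := by
    rw [hh, norm_smul]; norm_num; ring
  rw [ex] at t1
  rw [ey] at t2
  rw [map_neg, norm_neg] at t2
  rw [hn, Real.norm_eq_abs] at t1 t2
  rw [Real.norm_eq_abs] at t3
  rw [abs_le] at *
  constructor <;> nlinarith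

/-- the key antithetic payoff lemma.  If `P : ℝ^d → ℝ` is `C²` with
`‖DP(x)‖ ≤ L₁` and `‖D²P(x)‖ ≤ L₂` everywhere, then for any ℝ^d-valued random variables
`Xf, Xa, Xc` on a common probability space and any real `p ≥ 2`,
`E[|½(P(Xf)+P(Xa)) − P(Xc)|^p]
  ≤ 2^{p−1} L₁^p E[‖½(Xf+Xa) − Xc‖^p] + 2^{−(p+1)} L₂^p E[‖Xf − Xa‖^{2p}]`,
the expectations on the right being assumed finite. -/
theorem antithetic_payoff_lemma {d : ℕ}
    (P : EuclideanSpace ℝ (Fin d) → ℝ) (L₁ L₂ : ℝ)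
    (hL₁ : 0 ≤ L₁) (hL₂ : 0 ≤ L₂)
    (hP : ContDiff ℝ 2 P)
    (hDP : ∀ x, ‖fderiv ℝ P x‖ ≤ L₁)
    (hD2P : ∀ x, ‖iteratedFDeriv ℝ 2 P x‖ ≤ L₂)
    {Ω : Type*} [MeasurableSpace Ω] (μ : Measure Ω) [IsProbabilityMeasure μ]
    (Xf Xa Xc : Ω → EuclideanSpace ℝ (Fin d))
    (hXf : Measurable Xf) (hXa : Measurable Xa) (hXc : Measurable Xc)
    (p : ℝ) (hp : 2 ≤ p)
    (hint1 : Integrable (fun ω => ‖(2⁻¹ : ℝ) • (Xf ω + Xa ω) - Xc ω‖ ^ p) μ)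
    (hint2 : Integrable (fun ω => ‖Xf ω - Xa ω‖ ^ (2 * p)) μ) :
    ∫ ω, |(1 / 2) * (P (Xf ω) + P (Xa ω)) - P (Xc ω)| ^ p ∂μ
      ≤ (2 : ℝ) ^ (p - 1) * L₁ ^ p
          * ∫ ω, ‖(2⁻¹ : ℝ) • (Xf ω + Xa ω) - Xc ω‖ ^ p ∂μ
        + (2 : ℝ) ^ (-(p + 1)) * L₂ ^ p
          * ∫ ω, ‖Xf ω - Xa ω‖ ^ (2 * p) ∂μ := by
  have hle : ∀ ω, |(1 / 2) * (P (Xf ω) + P (Xa ω)) - P (Xc ω)| ^ p ≤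
      (2 : ℝ) ^ (p - 1) * L₁ ^ p * ‖(2⁻¹ : ℝ) • (Xf ω + Xa ω) - Xc ω‖ ^ p
        + (2 : ℝ) ^ (-(p + 1)) * L₂ ^ p * ‖Xf ω - Xa ω‖ ^ (2 * p) := by
    intro ω
    have h1 := aux_pointwise P L₁ L₂ hP hDP hD2P (Xf ω) (Xa ω) (Xc ω)
    have ha := norm_nonneg ((2⁻¹ : ℝ) • (Xf ω + Xa ω) - Xc ω)
    have hb := norm_nonneg (Xf ω - Xa ω)
    revert h1 ha hb
    generalize ‖(2⁻¹ : ℝ) • (Xf ω + Xa ω) - Xc ω‖ = a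
    generalize ‖Xf ω - Xa ω‖ = b
    intro h1 ha hb
    have hu : 0 ≤ L₁ * a := by positivity
    have hv : 0 ≤ L₂ * b ^ 2 / 4 := by positivity
    have h2 := NNReal.rpow_add_le_mul_rpow_add_rpow ⟨_, hu⟩ ⟨_, hv⟩ (p := p) (by linarith)
    have h3 : (L₁ * a + L₂ * b ^ 2 / 4) ^ p ≤
        (2 : ℝ) ^ (p - 1) * ((L₁ * a) ^ p + (L₂ * b ^ 2 / 4) ^ p) := by exact_mod_cast h2
    refine (Real.rpow_le_rpow (abs_nonneg _) h1 (by linarith)).trans (h3.trans (le_of_eq ?_))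
    have e4 : (4 : ℝ) ^ p = 2 ^ (2 * p) := by
      rw [Real.rpow_mul (by norm_num)]; norm_num
    have eb : (b ^ 2) ^ p = b ^ (2 * p) := by
      rw [Real.rpow_mul hb]; norm_num
    have e2 : (2 : ℝ) ^ (-(p + 1)) = 2 ^ (p - 1) / 2 ^ (2 * p) := by
      rw [← Real.rpow_sub (by norm_num)]; congr 1; ring
    rw [Real.div_rpow (by positivity) (by norm_num), Real.mul_rpow hL₁ ha,
      Real.mul_rpow hL₂ (by positivity), e4, eb, e2]
    ring
  calc _ ≤ ∫ ω, ((2 : ℝ) ^ (p - 1) * L₁ ^ p * ‖(2⁻¹ : ℝ) • (Xf ω + Xa ω) - Xc ω‖ ^ p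
        + (2 : ℝ) ^ (-(p + 1)) * L₂ ^ p * ‖Xf ω - Xa ω‖ ^ (2 * p)) ∂μ :=
        integral_mono_of_nonneg (Filter.Eventually.of_forall fun ω => by positivity)
          ((hint1.const_mul _).add (hint2.const_mul _)) (Filter.Eventually.of_forall hle)
    _ = _ := by
      rw [integral_add (hint1.const_mul _) (hint2.const_mul _), integral_const_mul,
        integral_const_mul]
end

section
/- Let ρ ∈ [0,1], let h, k > 0, and let Z be a standard normal random variable. For p ∈ ℓ²(ℤ, ℝ) define the random update (T_Z p)_j = p_j − ( sqrt(ρk)·Z/(2h) )·(p_{j+1} − p_{j−1}) + ( ((1−ρ)k + ρk Z²)/(2h²) )·(p_{j+1} − 2p_j + p_{j−1}). Then the scheme is mean-square stable, i.e. E[ ‖T_Z p‖²_{ℓ²(ℤ)} ] ≤ ‖p‖²_{ℓ²(ℤ)} for every p ∈ ℓ²(ℤ, ℝ), if and only if k/h² ≤ (1 + 2ρ²)^{−1}. -/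
open MeasureTheory ProbabilityTheory

lemma aux_deriv (q q' : ℝ → ℝ) (hq : ∀ t, HasDerivAt q (q' t) t) :
    deriv (fun t => q t * Real.exp (t ^ 2 / 2))
      = fun t => (q' t + t * q t) * Real.exp (t ^ 2 / 2) := by
  funext t
  have h1 : HasDerivAt (fun t : ℝ => t ^ 2 / 2) t t := by
    have := (hasDerivAt_pow 2 t).div_const 2
    convert! this using 1
    simp
  have := (hq t).mul h1.exp
  refine (HasDerivAt.deriv this).trans ?_
  ring

lemma aux_mgf : mgf id (gaussianReal 0 1) = fun t => 1 * Real.exp (t ^ 2 / 2) := by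
  rw [mgf_id_gaussianReal]; funext t; simp

lemma aux_d1 : deriv (fun t : ℝ => 1 * Real.exp (t ^ 2 / 2))
    = fun t => t * Real.exp (t ^ 2 / 2) := by
  rw [aux_deriv (fun _ => 1) (fun _ => 0) (fun t => hasDerivAt_const _ _)]
  funext t; ring

lemma aux_d2 : deriv (fun t : ℝ => t * Real.exp (t ^ 2 / 2))
    = fun t => (1 + t ^ 2) * Real.exp (t ^ 2 / 2) := by
  rw [aux_deriv (fun t => t) (fun _ => 1) (fun t => hasDerivAt_id _)]
  funext t; ring

lemma aux_d3 : deriv (fun t : ℝ => (1 + t ^ 2) * Real.exp (t ^ 2 / 2))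
    = fun t => (3 * t + t ^ 3) * Real.exp (t ^ 2 / 2) := by
  rw [aux_deriv (fun t => 1 + t ^ 2) (fun t => 2 * t)
    (fun t => by simpa using (hasDerivAt_pow 2 t).const_add 1)]
  funext t; ring

lemma aux_d4 : deriv (fun t : ℝ => (3 * t + t ^ 3) * Real.exp (t ^ 2 / 2))
    = fun t => (3 + 6 * t ^ 2 + t ^ 4) * Real.exp (t ^ 2 / 2) := by
  rw [aux_deriv (fun t => 3 * t + t ^ 3) (fun t => 3 + 3 * t ^ 2)
    (fun t => by
      have := ((hasDerivAt_id t).const_mul 3).add (hasDerivAt_pow 3 t)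
      convert! this using 1
      norm_num)]
  funext t; ring

lemma aux_mom (n : ℕ) : ∫ z, z ^ n ∂(gaussianReal 0 1)
    = iteratedDeriv n (mgf id (gaussianReal 0 1)) 0 := by
  rw [iteratedDeriv_mgf_zero] <;> simp

lemma aux_m2 : ∫ z, z ^ 2 ∂(gaussianReal 0 1) = 1 := by
  rw [aux_mom, aux_mgf]
  simp only [iteratedDeriv_succ, iteratedDeriv_zero, aux_d1, aux_d2]
  simp

lemma aux_m4 : ∫ z, z ^ 4 ∂(gaussianReal 0 1) = 3 := by
  rw [aux_mom, aux_mgf]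
  simp only [iteratedDeriv_succ, iteratedDeriv_zero, aux_d1, aux_d2, aux_d3, aux_d4]
  simp

lemma aux_int (n : ℕ) : Integrable (fun z : ℝ => z ^ n) (gaussianReal 0 1) := by
  have h := memLp_id_gaussianReal (μ := 0) (v := 1) (n : NNReal)
  have := h.integrable_norm_pow' 
  refine (integrable_norm_iff (by fun_prop)).1 ?_
  simpa using this

lemma aux_poly (a b c : ℝ) :
    ∫ z, (a + b * z ^ 2 + c * z ^ 4) ∂(gaussianReal 0 1) = a + b + 3 * c := by
  have h1 : Integrable (fun z : ℝ => a + b * z ^ 2) (gaussianReal 0 1) :=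
    (integrable_const a).add ((aux_int 2).const_mul b)
  rw [integral_add h1 ((aux_int 4).const_mul c), integral_add (integrable_const a) ((aux_int 2).const_mul b),
    integral_const_mul, integral_const_mul, aux_m2, aux_m4]
  simp; ring

lemma aux_key (u v : ℤ → ℝ) (hu : Summable (fun j => u j ^ 2))
    (hv : Summable (fun j => v j ^ 2)) : Summable (fun j => u j * v j) := by
  refine Summable.of_norm_bounded (hu.add hv) (fun j => ?_)
  rw [Real.norm_eq_abs, abs_le]
  constructor <;> nlinarith [sq_nonneg (u j + v j), sq_nonneg (u j - v j)]

lemma aux_shift (f : ℤ → ℝ) (s : ℝ) (hf : HasSum f s) (c : ℤ) :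
    HasSum (fun j => f (j + c)) s := (Equiv.addRight c).hasSum_iff.2 hf

lemma aux_sum (p : ℤ → ℝ) (hp : Memℓp p 2) : ∃ A B : ℝ, ∀ α β γ : ℝ,
    HasSum (fun j => (α * p j + β * p (j + 1) + γ * p (j - 1)) ^ 2)
      ((α ^ 2 + β ^ 2 + γ ^ 2) * (∑' j, p j ^ 2) + 2 * (α * β + α * γ) * A + 2 * β * γ * B) := by
  have hs : Summable (fun j => p j ^ 2) := by
    have := hp.summable (by simp)
    simpa using this
  have h0 := hs.hasSum
  generalize (∑' j, p j ^ 2) = S at h0 ⊢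
  have h1 : HasSum (fun j => p (j + 1) ^ 2) S := aux_shift _ _ h0 1
  have h2 : HasSum (fun j => p (j - 1) ^ 2) S := aux_shift _ _ h0 (-1)
  have hA := (aux_key p (fun j => p (j + 1)) h0.summable h1.summable).hasSum
  have hB := (aux_key (fun j => p (j + 1)) (fun j => p (j - 1)) h1.summable h2.summable).hasSum
  have hA' : HasSum (fun j => p (j - 1) * p j) (∑' j, p j * p (j + 1)) := by
    refine (aux_shift _ _ hA (-1)).congr_fun (fun j => ?_)
    rw [neg_add_cancel_right, sub_eq_add_neg]
  refine ⟨∑' j, p j * p (j + 1), ∑' j, p (j + 1) * p (j - 1), fun α β γ => ?_⟩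
  have h6 := (((((h0.mul_left (α ^ 2)).add (h1.mul_left (β ^ 2))).add (h2.mul_left (γ ^ 2))).add
    (hA.mul_left (2 * α * β))).add (hA'.mul_left (2 * α * γ))).add (hB.mul_left (2 * β * γ))
  have e1 : (α ^ 2 + β ^ 2 + γ ^ 2) * S + 2 * (α * β + α * γ) * (∑' j, p j * p (j + 1))
      + 2 * β * γ * (∑' j, p (j + 1) * p (j - 1))
      = α ^ 2 * S + β ^ 2 * S + γ ^ 2 * S + 2 * α * β * (∑' j, p j * p (j + 1))
      + 2 * α * γ * (∑' j, p j * p (j + 1)) + 2 * β * γ * (∑' j, p (j + 1) * p (j - 1)) := by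
    ring
  rw [e1]
  refine h6.congr_fun ?_
  intro j
  ring

/-- Expected energy identity. -/
lemma aux_main (ρ h k : ℝ) (hρ0 : 0 ≤ ρ) (hh : 0 < h) (hk : 0 < k)
    (p : ℤ → ℝ) (hp : Memℓp p 2) :
    Summable (fun j => (p (j + 1) - p (j - 1)) ^ 2) ∧
    Summable (fun j => (p (j + 1) - 2 * p j + p (j - 1)) ^ 2) ∧
    (∫ z, (∑' j : ℤ,
            (p j - Real.sqrt (ρ * k) * z / (2 * h) * (p (j + 1) - p (j - 1))
              + ((1 - ρ) * k + ρ * k * z ^ 2) / (2 * h ^ 2)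
                  * (p (j + 1) - 2 * p j + p (j - 1))) ^ 2)
          ∂(gaussianReal 0 1)) = ∑' j : ℤ, p j ^ 2
      + (k / h ^ 2) / 4 * (((k / h ^ 2) * (1 + 2 * ρ ^ 2) - 1)
            * (∑' j, (p (j + 1) - 2 * p j + p (j - 1)) ^ 2)
          - (1 - ρ) * ∑' j, (p (j + 1) - p (j - 1)) ^ 2) := by
  obtain ⟨A, B, hAB⟩ := aux_sum p hp
  set S := ∑' j, p j ^ 2
  have hD : HasSum (fun j => (p (j + 1) - p (j - 1)) ^ 2) (2 * S - 2 * B) := by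
    convert! hAB 0 1 (-1) using 1
    · funext j; ring
    · ring
  have hL : HasSum (fun j => (p (j + 1) - 2 * p j + p (j - 1)) ^ 2) (6 * S - 8 * A + 2 * B) := by
    convert! hAB (-2) 1 1 using 1
    · funext j; ring
    · ring
  refine ⟨hD.summable, hL.summable, ?_⟩
  rw [hD.tsum_eq, hL.tsum_eq]
  set r := k / h ^ 2 with hr
  have hsq : (Real.sqrt (ρ * k) / (2 * h)) ^ 2 = ρ * r / 4 := by
    rw [div_pow, Real.sq_sqrt (by positivity), hr]; field_simp; ring
  have hz : ∀ z : ℝ, (∑' j : ℤ,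
            (p j - Real.sqrt (ρ * k) * z / (2 * h) * (p (j + 1) - p (j - 1))
              + ((1 - ρ) * k + ρ * k * z ^ 2) / (2 * h ^ 2)
                  * (p (j + 1) - 2 * p j + p (j - 1))) ^ 2)
      = (S - r * (1 - ρ) * (2 * S - 2 * A) + r ^ 2 / 4 * (1 - ρ) ^ 2 * (6 * S - 8 * A + 2 * B))
        + (ρ * r / 4 * (2 * S - 2 * B) - r * ρ * (2 * S - 2 * A)
            + r ^ 2 / 2 * (1 - ρ) * ρ * (6 * S - 8 * A + 2 * B)) * z ^ 2
        + (r ^ 2 / 4 * ρ ^ 2 * (6 * S - 8 * A + 2 * B)) * z ^ 4 := by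
    intro z
    have hb : ((1 - ρ) * k + ρ * k * z ^ 2) / (2 * h ^ 2) = r / 2 * ((1 - ρ) + ρ * z ^ 2) := by
      rw [hr]; field_simp
    have ha : Real.sqrt (ρ * k) * z / (2 * h) = Real.sqrt (ρ * k) / (2 * h) * z := by ring
    rw [hb, ha]
    set a := Real.sqrt (ρ * k) / (2 * h)
    set b := r / 2 * ((1 - ρ) + ρ * z ^ 2) with hbdef
    have := (hAB (1 - 2 * b) (-(a * z) + b) (a * z + b)).tsum_eq
    rw [show (fun j => ((1 - 2 * b) * p j + (-(a * z) + b) * p (j + 1)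
      + (a * z + b) * p (j - 1)) ^ 2) = fun j => (p j - a * z * (p (j + 1) - p (j - 1))
        + b * (p (j + 1) - 2 * p j + p (j - 1))) ^ 2 by funext j; ring] at this
    rw [this, hbdef]
    linear_combination (2 * S - 2 * B) * z ^ 2 * hsq
  simp_rw [hz]
  rw [aux_poly]
  ring

/-- Truncated sawtooth. -/
noncomputable def auxP (n : ℕ) (j : ℤ) : ℝ :=
  if 0 ≤ j ∧ j < n then (if Even j then 1 else -1) else 0

lemma auxP_mem (n : ℕ) : Memℓp (auxP n) 2 := by
  rw [memℓp_gen_iff (by simp)]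
  refine summable_of_ne_finset_zero (s := Finset.Ico 0 (n : ℤ)) (fun j hj => ?_)
  simp only [Finset.mem_Ico] at hj
  simp [auxP, hj]

lemma auxP_D (n : ℕ) : ∑' j, (auxP n (j + 1) - auxP n (j - 1)) ^ 2 ≤ 16 := by
  rw [tsum_eq_sum (s := ({-1, 0, (n : ℤ) - 1, (n : ℤ)} : Finset ℤ))]
  · calc _ ≤ ∑ j ∈ ({-1, 0, (n : ℤ) - 1, (n : ℤ)} : Finset ℤ), (4 : ℝ) := by
          refine Finset.sum_le_sum (fun j _ => ?_)
          unfold auxP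
          split_ifs <;> norm_num
      _ ≤ 16 := by
          rw [Finset.sum_const, nsmul_eq_mul]
          have : (Finset.card ({-1, 0, (n : ℤ) - 1, (n : ℤ)} : Finset ℤ)) ≤ 4 :=
            Finset.card_le_four
          have : ((Finset.card ({-1, 0, (n : ℤ) - 1, (n : ℤ)} : Finset ℤ) : ℕ) : ℝ) ≤ 4 := by
            exact_mod_cast this
          linarith
  · intro j hj
    simp only [Finset.mem_insert, Finset.mem_singleton, not_or] at hj
    have h1 : (0 ≤ j + 1 ∧ j + 1 < n) ↔ (0 ≤ j - 1 ∧ j - 1 < n) := by omega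
    have h2 : Even (j + 1) ↔ Even (j - 1) := by simp [Int.even_add, Int.even_sub]
    simp [auxP, h1, h2]

lemma auxP_L (n : ℕ) (hs : Summable (fun j => (auxP n (j + 1) - 2 * auxP n j + auxP n (j - 1)) ^ 2)) :
    16 * ((n : ℝ) - 2) ≤ ∑' j, (auxP n (j + 1) - 2 * auxP n j + auxP n (j - 1)) ^ 2 := by
  refine le_trans ?_ (hs.sum_le_tsum (Finset.Ico 1 ((n : ℤ) - 1)) (fun _ _ => sq_nonneg _))
  rw [Finset.sum_congr rfl (g := fun _ => (16 : ℝ))]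
  · rw [Finset.sum_const, nsmul_eq_mul, Int.card_Ico]
    have : (n : ℤ) - 2 ≤ ((n : ℤ) - 1 - 1).toNat := by omega
    have : (n : ℝ) - 2 ≤ (((n : ℤ) - 1 - 1).toNat : ℝ) := by exact_mod_cast this
    linarith
  · intro j hj
    rw [Finset.mem_Ico] at hj
    have a1 : 0 ≤ j + 1 ∧ j + 1 < n := by omega
    have a2 : 0 ≤ j ∧ j < n := by omega
    have a3 : 0 ≤ j - 1 ∧ j - 1 < n := by omega
    have h2 : Even (j - 1) ↔ ¬ Even j := by simp [Int.even_sub]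
    have h3 : Even (j + 1) ↔ ¬ Even j := by simp [Int.even_add]
    simp only [auxP, a1, a2, a3, h2, h3]
    by_cases hj : Even j <;> simp [hj] <;> norm_num

/-- mean-square stability of the Milstein-in-time, central-in-space
discretisation of the Giles–Reisinger SPDE (with μ = 0), on the unbounded grid `j ∈ ℤ`.
With `Z` standard normal, the random update
`(T_Z p)_j = p_j − (√(ρk)·Z/(2h))(p_{j+1} − p_{j−1})
            + (((1−ρ)k + ρk Z²)/(2h²))(p_{j+1} − 2p_j + p_{j−1})`
satisfies `E[‖T_Z p‖²_{ℓ²}] ≤ ‖p‖²_{ℓ²}` for every `p ∈ ℓ²(ℤ)` iff `k/h² ≤ (1 + 2ρ²)⁻¹`. -/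
theorem spde_milstein_mean_square_stability (ρ h k : ℝ)
    (hρ0 : 0 ≤ ρ) (hρ1 : ρ ≤ 1) (hh : 0 < h) (hk : 0 < k) :
    (∀ p : ℤ → ℝ, Memℓp p 2 →
        (∫ z, (∑' j : ℤ,
            (p j - Real.sqrt (ρ * k) * z / (2 * h) * (p (j + 1) - p (j - 1))
              + ((1 - ρ) * k + ρ * k * z ^ 2) / (2 * h ^ 2)
                  * (p (j + 1) - 2 * p j + p (j - 1))) ^ 2)
          ∂(gaussianReal 0 1))
          ≤ ∑' j : ℤ, p j ^ 2)
      ↔ k / h ^ 2 ≤ (1 + 2 * ρ ^ 2)⁻¹ := by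
  have hr : 0 < k / h ^ 2 := by positivity
  have hc : 0 < 1 + 2 * ρ ^ 2 := by positivity
  rw [le_inv_comm₀ hr hc, le_inv_comm₀ hc hr, ← one_div, le_div_iff₀ hc]
  constructor
  · intro H
    by_contra hcon
    push Not at hcon
    set e := k / h ^ 2 * (1 + 2 * ρ ^ 2) - 1 with he
    have he0 : 0 < e := by linarith
    obtain ⟨n, hn⟩ := exists_nat_gt (2 + 1 / e)
    obtain ⟨-, hL, hE⟩ := aux_main ρ h k hρ0 hh hk (auxP n) (auxP_mem n)
    have h1 := H _ (auxP_mem n)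
    rw [hE, ← he] at h1
    have hD := auxP_D n
    have hL' := auxP_L n hL
    set L := ∑' j, (auxP n (j + 1) - 2 * auxP n j + auxP n (j - 1)) ^ 2
    set D := ∑' j, (auxP n (j + 1) - auxP n (j - 1)) ^ 2
    have hD0 : 0 ≤ D := tsum_nonneg fun _ => sq_nonneg _
    have h2 : e * L - (1 - ρ) * D ≤ 0 := by
      by_contra h3
      push Not at h3
      have := mul_pos (by positivity : 0 < k / h ^ 2 / 4) h3
      linarith
    have h4 : 1 < e * ((n : ℝ) - 2) := by
      have : 1 / e < (n : ℝ) - 2 := by linarith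
      rw [div_lt_iff₀ he0] at this
      linarith
    have h5 : e * (16 * ((n : ℝ) - 2)) ≤ e * L := mul_le_mul_of_nonneg_left hL' he0.le
    nlinarith [mul_nonneg hρ0 hD0]
  · intro H p hp
    obtain ⟨-, -, hE⟩ := aux_main ρ h k hρ0 hh hk p hp
    rw [hE]
    have hL0 : 0 ≤ ∑' j, (p (j + 1) - 2 * p j + p (j - 1)) ^ 2 := tsum_nonneg fun _ => sq_nonneg _
    have hD0 : 0 ≤ ∑' j, (p (j + 1) - p (j - 1)) ^ 2 := tsum_nonneg fun _ => sq_nonneg _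
    have h1 := mul_nonneg (sub_nonneg.2 hρ1) hD0
    have h2 := mul_nonneg (sub_nonneg.2 H) hL0
    have h3 : 0 ≤ k / h ^ 2 / 4 := by positivity
    have h4 := mul_nonneg h3 (add_nonneg h1 h2)
    linarith
end
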